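/- arXiv:1702.03568 — 4 statements merged into one kernel-verified Lean document; each statement's English description precedes it below -/
import Mathlib

section
/- Fix θ0, θT ∈ ℝ with 0 < θ0 < π and 0 < θT < 2π, and suppose (a1, a3, c1, c3) solve the length-3 linear system. Then A(θ)² + C(θ)² ≤ 1 holds for all θ ∈ ℝ if and only if g3(θ0, θT) ≤ 0. -/
/-!
With `x = cos² (θ / 2)`, the quantity `A² + C² - 1` is a cubic polynomial in `x` with leading
coefficient `a3² - c3²`. The linear system says that it vanishes at `x = 1` and has a double root
at `x₀ = cos² (θ0 / 2)`, so it equals `(a3² - c3²) (x - x₀)² (x - 1)`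
(`cubic_eq_of_double_root`). The bound for all `θ` therefore means `0 ≤ a3² - c3²`. Solving the
system for `a3` and `c3` shows that `a3² - c3²` is a positive multiple of
`-(cos (θ0 / 2) - cos (θT / 2))² g3` (`leading_coeff_identity`). If the squared factor is zero, so is
`g3`; hence the sign condition is exactly `g3 ≤ 0`.
-/

/-- A cubic with a root at `1` and a double root at `r ≠ 1` is determined by its leading
coefficient. -/
theorem cubic_eq_of_double_root (k p q t r : ℝ) (hr : r ≠ 1)
    (h1 : k + p + q + t = 0) (h2 : k * r ^ 3 + p * r ^ 2 + q * r + t = 0)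
    (h3 : 3 * k * r ^ 2 + 2 * p * r + q = 0) (x : ℝ) :
    k * x ^ 3 + p * x ^ 2 + q * x + t = k * (x - r) ^ 2 * (x - 1) := by
  have hr' : r - 1 ≠ 0 := sub_ne_zero.mpr hr
  -- The divided difference of the cubic between `1` and `r` vanishes.
  have h4 : k * (r ^ 2 + r + 1) + p * (r + 1) + q = 0 := by
    apply mul_left_cancel₀ hr'
    linear_combination h2 - h1
  have h5 : k * (2 * r + 1) + p = 0 := by
    apply mul_left_cancel₀ hr'
    linear_combination h3 - h4
  linear_combination (x ^ 2 - 1 - (r + 1) * (x - 1)) * h5 + (x - 1) * h4 + h1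

/-- In terms of `c, s = cos, sin (θ0 / 2)` and `C, S = cos, sin (θT / 2)`, the linear system
determines `a3² - c3²`; the last factor is `g3` since `4 c³ - 3 c = cos (3 θ0 / 2)`. -/
theorem leading_coeff_identity (c s C S a1 a3 c1 c3 : ℝ)
    (hcs : s ^ 2 + c ^ 2 = 1) (hCS : S ^ 2 + C ^ 2 = 1)
    (e1 : a1 + a3 = 1) (e2 : a1 * c + a3 * c ^ 3 = C) (e3 : c1 * s + c3 * s ^ 3 = -S)
    (e4 : C * s * (a1 + 3 * a3 * c ^ 2) + S * c * (c1 + 3 * c3 * s ^ 2) = 0) :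
    (a3 ^ 2 - c3 ^ 2) * (2 * s ^ 3 * S * c ^ 2) ^ 2
      = -((c - C) ^ 2 * ((c - C) * (4 * c ^ 3 - 3 * c - C))) := by
  have hs : s ^ 2 = 1 - c ^ 2 := by linarith
  have hS : S ^ 2 = 1 - C ^ 2 := by linarith
  have ha3 : a3 * (c * s ^ 2) = c - C := by
    rw [hs]; linear_combination c * e1 - e2
  have ha1 : a1 = 1 - a3 := by linarith
  have hc3 : c3 * (2 * s ^ 3 * S * c ^ 2) = (c - C) * (c + C - 2 * C * c ^ 2) := by
    subst ha1
    linear_combination c * s * e4 - S * c ^ 2 * e3 - C * (3 * c ^ 2 - 1) * ha3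
      - C * c * hs + c ^ 2 * hS
  have ha : a3 * (2 * s ^ 3 * S * c ^ 2) = (c - C) * (2 * s * S * c) := by
    linear_combination 2 * s * S * c * ha3
  have key : (2 * s * S * c) ^ 2 = 4 * (1 - c ^ 2) * (1 - C ^ 2) * c ^ 2 := by
    rw [← hs, ← hS]; ring
  calc _ = (a3 * (2 * s ^ 3 * S * c ^ 2)) ^ 2 - (c3 * (2 * s ^ 3 * S * c ^ 2)) ^ 2 := by ring
    _ = (c - C) ^ 2 * ((2 * s * S * c) ^ 2 - (c + C - 2 * C * c ^ 2) ^ 2) := by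
      rw [ha, hc3]; ring
    _ = _ := by rw [key]; ring

open Real

/-- Region of validity for the length-3 composite gate: given a solution
`(a1, a3, c1, c3)` of the length-3 linear system for `(θ0, θT)`, the bound
`A(θ)² + C(θ)² ≤ 1` holds for all `θ` iff `g3(θ0, θT) ≤ 0`. -/
theorem length_three_region_of_validity (θ0 θT a1 a3 c1 c3 : ℝ)
    (hθ0 : 0 < θ0) (hθ0' : θ0 < π) (hθT : 0 < θT) (hθT' : θT < 2 * π)
    (e1 : a1 + a3 = 1)
    (e2 : a1 * cos (θ0 / 2) + a3 * cos (θ0 / 2) ^ 3 = cos (θT / 2))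
    (e3 : c1 * sin (θ0 / 2) + c3 * sin (θ0 / 2) ^ 3 = -sin (θT / 2))
    (e4 : cos (θT / 2) * sin (θ0 / 2) * (a1 + 3 * a3 * cos (θ0 / 2) ^ 2)
        + sin (θT / 2) * cos (θ0 / 2) * (c1 + 3 * c3 * sin (θ0 / 2) ^ 2) = 0) :
    (∀ θ : ℝ, (a1 * cos (θ / 2) + a3 * cos (θ / 2) ^ 3) ^ 2
        + (c1 * sin (θ / 2) + c3 * sin (θ / 2) ^ 3) ^ 2 ≤ 1) ↔
      (cos (θ0 / 2) - cos (θT / 2)) * (cos (3 * θ0 / 2) - cos (θT / 2)) ≤ 0 := by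
  have hc : 0 < cos (θ0 / 2) := cos_pos_of_mem_Ioo ⟨by linarith, by linarith⟩
  have hs : 0 < sin (θ0 / 2) := sin_pos_of_pos_of_lt_pi (by linarith) (by linarith)
  have hS : 0 < sin (θT / 2) := sin_pos_of_pos_of_lt_pi (by linarith) (by linarith)
  have hcs := sin_sq_add_cos_sq (θ0 / 2)
  have hCS := sin_sq_add_cos_sq (θT / 2)
  have h3 : cos (3 * θ0 / 2) = 4 * cos (θ0 / 2) ^ 3 - 3 * cos (θ0 / 2) := by
    rw [← cos_three_mul]; ring_nf
  rw [h3]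
  have hK := leading_coeff_identity _ _ _ _ a1 a3 c1 c3 hcs hCS e1 e2 e3 e4
  generalize cos (θT / 2) = C at *
  generalize sin (θT / 2) = S at *
  generalize cos (θ0 / 2) = c at *
  generalize sin (θ0 / 2) = s at *
  have hs2 : s ^ 2 = 1 - c ^ 2 := by linarith
  have hcub : ∀ x : ℝ, x * (a1 + a3 * x) ^ 2 + (1 - x) * (c1 + c3 * (1 - x)) ^ 2 - 1
      = (a3 ^ 2 - c3 ^ 2) * (x - c ^ 2) ^ 2 * (x - 1) := by
    intro x
    rw [← cubic_eq_of_double_root (a3 ^ 2 - c3 ^ 2) (2 * a1 * a3 + 3 * c3 ^ 2 + 2 * c1 * c3)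
      (a1 ^ 2 - c1 ^ 2 - 4 * c1 * c3 - 3 * c3 ^ 2) ((c1 + c3) ^ 2 - 1) (c ^ 2)]
    · ring
    · nlinarith
    · linear_combination (a1 + a3 + 1) * e1
    · have h : c ^ 2 * (a1 + a3 * c ^ 2) ^ 2 + s ^ 2 * (c1 + c3 * s ^ 2) ^ 2 - 1 = 0 := by
        linear_combination (a1 * c + a3 * c ^ 3 + C) * e2 + (c1 * s + c3 * s ^ 3 - S) * e3 + hCS
      rw [hs2] at h
      linear_combination h
    · have h : (a1 + a3 * c ^ 2) * (a1 + 3 * a3 * c ^ 2)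
          - (c1 + c3 * s ^ 2) * (c1 + 3 * c3 * s ^ 2) = 0 := by
        apply mul_left_cancel₀ (mul_pos hc hs).ne'
        linear_combination e4 + s * (a1 + 3 * a3 * c ^ 2) * e2
          - c * (c1 + 3 * c3 * s ^ 2) * e3
      rw [hs2] at h
      linear_combination h
  have hbound : (∀ θ : ℝ, (a1 * cos (θ / 2) + a3 * cos (θ / 2) ^ 3) ^ 2
      + (c1 * sin (θ / 2) + c3 * sin (θ / 2) ^ 3) ^ 2 ≤ 1) ↔ 0 ≤ a3 ^ 2 - c3 ^ 2 := by
    constructor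
    · intro h
      -- At `θ = π`, that is `x = 0`, the factor `(x - c²)² (x - 1)` is strictly negative.
      have h0 := h π
      rw [cos_pi_div_two, sin_pi_div_two] at h0
      have h1 : 0 ≤ (a3 ^ 2 - c3 ^ 2) * c ^ 4 := by
        linarith [hcub 0]
      exact nonneg_of_mul_nonneg_left h1 (by positivity)
    · intro h θ
      have hx := hcub (cos (θ / 2) ^ 2)
      rw [← sin_sq] at hx
      have h1 : 0 ≤ (a3 ^ 2 - c3 ^ 2) * (cos (θ / 2) ^ 2 - c ^ 2) ^ 2 * (1 - cos (θ / 2) ^ 2) := by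
        rw [← sin_sq]; positivity
      linarith
  rw [hbound]
  have hpos : 0 < (2 * s ^ 3 * S * c ^ 2) ^ 2 := by positivity
  constructor
  · intro h
    by_cases hcC : c - C = 0
    · simp [hcC]
    · have h1 := mul_nonneg h hpos.le
      rw [hK] at h1
      have h2 : 0 < (c - C) ^ 2 := by positivity
      by_contra! h4
      linarith [mul_pos h2 h4]
  · intro h
    have h1 : 0 ≤ (a3 ^ 2 - c3 ^ 2) * (2 * s ^ 3 * S * c ^ 2) ^ 2 := by
      rw [hK]
      linarith [mul_nonneg (sq_nonneg (c - C)) (neg_nonneg.mpr h)]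
    exact nonneg_of_mul_nonneg_left h1 hpos
end

section
/- Fix θ0, θT ∈ ℝ with 0 < θ0 < π and 0 < θT < 2π, suppose (a1, a3, c1, c3) solve the length-3 linear system, and set f(θ) = A(θ)² + C(θ)². Then f(0) = f(θ0) = f(2π − θ0) = 1 and f'(0) = f'(θ0) = f'(2π − θ0) = 0; that is, θ = 0, θ0, and 2π − θ0 are stationary points of f at which f attains the value 1. -/
/-!
The derivative of `f = A² + C²` is `2AA' + 2CC'`. At `θ = 0` it vanishes since `A'` and `C` are
both multiples of `sin (θ / 2)`; at `θ = θ0` the interpolation conditions `e2`, `e3` turn it into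
the negative of the left side of `e4`. The point `2π − θ0` is the mirror image of `θ0` under
`θ ↦ 2π − θ`, which changes the sign of `cos (θ / 2)` and fixes `sin (θ / 2)`, so that `f` is
preserved and its derivative changes sign.
-/

open Real

/-- For the length-3 composite gate solution, `θ = 0`, `θ0`, and `2π − θ0` are stationary
points of `f = A² + C²` at which `f` attains the value `1`. -/
theorem length_three_stationary_points (θ0 θT a1 a3 c1 c3 : ℝ)
    (hθ0 : 0 < θ0) (hθ0' : θ0 < π) (hθT : 0 < θT) (hθT' : θT < 2 * π)
    (e1 : a1 + a3 = 1)
    (e2 : a1 * cos (θ0 / 2) + a3 * cos (θ0 / 2) ^ 3 = cos (θT / 2))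
    (e3 : c1 * sin (θ0 / 2) + c3 * sin (θ0 / 2) ^ 3 = -sin (θT / 2))
    (e4 : cos (θT / 2) * sin (θ0 / 2) * (a1 + 3 * a3 * cos (θ0 / 2) ^ 2)
        + sin (θT / 2) * cos (θ0 / 2) * (c1 + 3 * c3 * sin (θ0 / 2) ^ 2) = 0)
    (f : ℝ → ℝ)
    (hf : ∀ θ : ℝ, f θ = (a1 * cos (θ / 2) + a3 * cos (θ / 2) ^ 3) ^ 2
        + (c1 * sin (θ / 2) + c3 * sin (θ / 2) ^ 3) ^ 2) :
    f 0 = 1 ∧ f θ0 = 1 ∧ f (2 * π - θ0) = 1 ∧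
      deriv f 0 = 0 ∧ deriv f θ0 = 0 ∧ deriv f (2 * π - θ0) = 0 := by
  have hd (θ : ℝ) : HasDerivAt f
      (-(a1 * cos (θ / 2) + a3 * cos (θ / 2) ^ 3) * sin (θ / 2)
          * (a1 + 3 * a3 * cos (θ / 2) ^ 2)
        + (c1 * sin (θ / 2) + c3 * sin (θ / 2) ^ 3) * cos (θ / 2)
          * (c1 + 3 * c3 * sin (θ / 2) ^ 2)) θ := by
    rw [funext hf]
    have hid : HasDerivAt (fun x : ℝ => x / 2) (1 / 2) θ := (hasDerivAt_id' θ).div_const 2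
    have hc := hid.cos
    have hs := hid.sin
    have hA := ((hc.const_mul a1).add ((hc.pow 3).const_mul a3)).pow 2
    have hC := ((hs.const_mul c1).add ((hs.pow 3).const_mul c3)).pow 2
    refine (hA.add hC).congr_deriv ?_
    simp only [Pi.add_apply, Pi.pow_apply]
    push_cast
    ring
  have hhalf : (2 * π - θ0) / 2 = π - θ0 / 2 := by ring
  have hT := sin_sq_add_cos_sq (θT / 2)
  refine ⟨?_, ?_, ?_, ?_, ?_, ?_⟩
  · simp [hf, e1]
  · rw [hf, e2, e3]
    linarith
  · rw [hf, hhalf, cos_pi_sub, sin_pi_sub, e3]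
    have hA : a1 * -cos (θ0 / 2) + a3 * (-cos (θ0 / 2)) ^ 3 = -cos (θT / 2) := by
      rw [← e2]
      ring
    rw [hA]
    linarith
  · rw [(hd 0).deriv]
    simp
  · rw [(hd θ0).deriv, e2, e3]
    linarith
  · rw [(hd _).deriv, hhalf, cos_pi_sub, sin_pi_sub, e3]
    have hA : a1 * -cos (θ0 / 2) + a3 * (-cos (θ0 / 2)) ^ 3 = -cos (θT / 2) := by
      rw [← e2]
      ring
    rw [hA]
    linarith
end

section
/- Fix θ0, θT ∈ ℝ with 0 < θ0 < π and 0 < θT < 2π, and let A, C be the symmetric length-4 solution. Then: A(0) = 1; A(π) = 1; A(θ0) = cos(θT/2); C(θ0) = −sin(θT/2); and cos(θT/2)·A'(θ0) − sin(θT/2)·C'(θ0) = 0. -/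
/-!
Write `x = θT / 4`, so that `cos (θT / 2) = 1 - 2 sin² x` and `sin (θT / 2) = 2 sin x cos x`.
The range of `θT` gives `cos x ≠ 0`, and that of `θ0` gives `sin θ0 ≠ 0`, so every denominator is
nonzero. Since `cos (2 θ0) - 1 = -2 sin² θ0`, the values at `θ0` simplify directly, and the
derivatives become `A' θ0 = -4 sin² x cos θ0 / sin θ0` and
`C' θ0 = -2 tan x cos (θT / 2) cos θ0 / sin θ0`, for which the last combination cancels.
-/

open Real

/-- The symmetric length-4 solution satisfies the linear constraints: `A(0) = 1`,
`A(π) = 1`, `A(θ0) = cos(θT/2)`, `C(θ0) = −sin(θT/2)`, and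
`cos(θT/2)·A'(θ0) − sin(θT/2)·C'(θ0) = 0`. -/
theorem symmetric_length_four_constraints (θ0 θT : ℝ)
    (hθ0 : 0 < θ0) (hθ0' : θ0 < π) (hθT : 0 < θT) (hθT' : θT < 2 * π)
    (A C : ℝ → ℝ)
    (hA : ∀ θ : ℝ, A θ = 1 + (sin (θT / 4) ^ 2 / sin θ0 ^ 2) * (cos (2 * θ) - 1))
    (hC : ∀ θ : ℝ, C θ = (tan (θT / 4) / sin θ0) *
      (-2 * sin θ + (sin (θT / 4) ^ 2 / sin θ0 ^ 2) *
        (2 * sin θ - cos θ0 * sin (2 * θ))))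
    :
    A 0 = 1 ∧ A π = 1 ∧ A θ0 = cos (θT / 2) ∧ C θ0 = -sin (θT / 2) ∧
      cos (θT / 2) * deriv A θ0 - sin (θT / 2) * deriv C θ0 = 0 := by
  have hS : sin θ0 ≠ 0 := (sin_pos_of_pos_of_lt_pi hθ0 hθ0').ne'
  have hc : cos (θT / 4) ≠ 0 :=
    (cos_pos_of_mem_Ioo ⟨by linarith, by linarith⟩).ne'
  have e2 : θT / 2 = 2 * (θT / 4) := by ring
  have hcos : cos (θT / 2) = 1 - 2 * sin (θT / 4) ^ 2 := by
    rw [e2, cos_two_mul, cos_sq']; ring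
  have hsin : sin (θT / 2) = 2 * sin (θT / 4) * cos (θT / 4) := by
    rw [e2, sin_two_mul]
  have hcos0 : cos (2 * θ0) = 1 - 2 * sin θ0 ^ 2 := by
    rw [cos_two_mul, cos_sq']; ring
  have dlin : HasDerivAt (fun θ : ℝ => 2 * θ) 2 θ0 := by
    simpa using (hasDerivAt_id θ0).const_mul 2
  have dA : deriv A θ0 = -4 * sin (θT / 4) ^ 2 * cos θ0 / sin θ0 := by
    rw [funext hA]
    have h := ((dlin.cos.sub_const 1).const_mul (sin (θT / 4) ^ 2 / sin θ0 ^ 2)).const_add 1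
    rw [h.deriv, sin_two_mul]
    field_simp
    ring
  have dC : deriv C θ0 =
      -2 * tan (θT / 4) * (1 - 2 * sin (θT / 4) ^ 2) * cos θ0 / sin θ0 := by
    rw [funext hC]
    have h := (((hasDerivAt_sin θ0).const_mul (-2)).add
      ((((hasDerivAt_sin θ0).const_mul 2).sub (dlin.sin.const_mul (cos θ0))).const_mul
        (sin (θT / 4) ^ 2 / sin θ0 ^ 2))).const_mul (tan (θT / 4) / sin θ0)
    refine h.deriv.trans ?_
    rw [hcos0]
    field_simp
    ring
  refine ⟨by simp [hA], by simp [hA], ?_, ?_, ?_⟩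
  · rw [hA, hcos, hcos0]
    field_simp
    ring
  · rw [hC, hsin, sin_two_mul, tan_eq_sin_div_cos]
    field_simp
    rw [cos_sq' θ0, cos_sq' (θT / 4)]
    ring
  · rw [dA, dC, hcos, hsin, tan_eq_sin_div_cos]
    field_simp
    ring
end

section
/- Fix θ0, θT ∈ ℝ with 0 < θ0 < π and 0 < θT < 2π, and let A, C be the symmetric length-4 solution. Then A(θ)² + C(θ)² ≤ 1 holds for all θ ∈ ℝ if and only if g4(θ0, θT) ≤ 0, where g4(θ0, θT) = cos(2θ0) − cos(θT/2). -/
/-!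
Put `a = sin² (θT/4) / sin² θ0`. Expanding both sides gives the identity
`cos² (θT/4) * (1 - A² - C²) = 4 a² (1 - a) sin² θ (cos θ0 - cos θ)²`,
so `A² + C² ≤ 1` holds everywhere as soon as `a ≤ 1`, and conversely a single `θ` at which
`sin θ ≠ 0` and `cos θ ≠ cos θ0`, such as `θ0 / 2`, forces `a ≤ 1`. Since
`cos (2 θ0) - cos (θT/2) = 2 (sin² (θT/4) - sin² θ0)`, this is the condition `g4 ≤ 0`.
-/

open Real

/-- The defect `1 - A² - C²` in closed form, in polynomial coordinates: `s, c` stand for the sine and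
cosine of `θT/4`, `S, K` for those of `θ0`, and `x, y` for those of `θ`. -/
lemma defect_identity (s c S K x y : ℝ) (hc : c ≠ 0) (hS : S ≠ 0)
    (h1 : s ^ 2 + c ^ 2 = 1) (h2 : S ^ 2 + K ^ 2 = 1) (h3 : x ^ 2 + y ^ 2 = 1) :
    c ^ 2 * (1 - (1 + s ^ 2 / S ^ 2 * (-2 * x ^ 2)) ^ 2
      - (s / c / S * (-2 * x + s ^ 2 / S ^ 2 * (2 * x - K * (2 * x * y)))) ^ 2)
      = 4 * (s ^ 2 / S ^ 2) ^ 2 * (1 - s ^ 2 / S ^ 2) * x ^ 2 * (K - y) ^ 2 := by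
  obtain ⟨a, ha⟩ : ∃ a, a = s ^ 2 / S ^ 2 := ⟨_, rfl⟩
  have hs : s ^ 2 = a * S ^ 2 := by rw [ha]; field_simp
  have hc2 : c ^ 2 = 1 - a + a * K ^ 2 := by linear_combination h1 - hs - a * h2
  have hx : x ^ 2 = 1 - y ^ 2 := by linear_combination h3
  rw [← ha]
  have hC : c ^ 2 * (s / c / S * (-2 * x + a * (2 * x - K * (2 * x * y)))) ^ 2
      = 4 * a * x ^ 2 * (1 - a + a * K * y) ^ 2 := by
    rw [ha]; field_simp; ring
  rw [mul_sub, hC, hc2]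
  linear_combination (-4 * a ^ 2 * x ^ 2 * (1 - a + a * K ^ 2)) * hx

theorem symmetric_length_four_region_of_validity (θ0 θT : ℝ)
    (hθ0 : 0 < θ0) (hθ0' : θ0 < π) (hθT : 0 < θT) (hθT' : θT < 2 * π)
    (A C : ℝ → ℝ)
    (hA : ∀ θ : ℝ, A θ = 1 + (sin (θT / 4) ^ 2 / sin θ0 ^ 2) * (cos (2 * θ) - 1))
    (hC : ∀ θ : ℝ, C θ = (tan (θT / 4) / sin θ0) *
      (-2 * sin θ + (sin (θT / 4) ^ 2 / sin θ0 ^ 2) *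
        (2 * sin θ - cos θ0 * sin (2 * θ))))
    :
    (∀ θ : ℝ, (A θ) ^ 2 + (C θ) ^ 2 ≤ 1) ↔ cos (2 * θ0) - cos (θT / 2) ≤ 0 := by
  have hS : 0 < sin θ0 := sin_pos_of_pos_of_lt_pi hθ0 hθ0'
  have hs : 0 < sin (θT / 4) := sin_pos_of_pos_of_lt_pi (by linarith) (by linarith)
  have hc : 0 < cos (θT / 4) := cos_pos_of_mem_Ioo ⟨by linarith, by linarith⟩
  have hid (θ : ℝ) : cos (θT / 4) ^ 2 * (1 - A θ ^ 2 - C θ ^ 2)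
      = 4 * (sin (θT / 4) ^ 2 / sin θ0 ^ 2) ^ 2 * (1 - sin (θT / 4) ^ 2 / sin θ0 ^ 2)
        * sin θ ^ 2 * (cos θ0 - cos θ) ^ 2 := by
    have h := defect_identity (sin (θT / 4)) (cos (θT / 4)) (sin θ0) (cos θ0) (sin θ) (cos θ)
      hc.ne' hS.ne' (sin_sq_add_cos_sq _) (sin_sq_add_cos_sq _) (sin_sq_add_cos_sq _)
    have h2 : cos (2 * θ) - 1 = -2 * sin θ ^ 2 := by rw [cos_two_mul, cos_sq']; ring
    rw [hA, hC, tan_eq_sin_div_cos, sin_two_mul, h2]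
    exact h
  have hg : cos (2 * θ0) - cos (θT / 2) ≤ 0 ↔ sin (θT / 4) ^ 2 / sin θ0 ^ 2 ≤ 1 := by
    rw [div_le_one (by positivity), show θT / 2 = 2 * (θT / 4) by ring, cos_two_mul, cos_two_mul,
      cos_sq', cos_sq']
    constructor <;> intro h <;> linarith
  rw [hg]
  have ha : 0 < sin (θT / 4) ^ 2 / sin θ0 ^ 2 := by positivity
  generalize sin (θT / 4) ^ 2 / sin θ0 ^ 2 = a at hid ha ⊢
  constructor
  · intro h
    have hx : 0 < sin (θ0 / 2) := sin_pos_of_pos_of_lt_pi (by linarith) (by linarith)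
    have hy : cos θ0 < cos (θ0 / 2) :=
      cos_lt_cos_of_nonneg_of_le_pi (by linarith) hθ0'.le (by linarith)
    have hne : cos θ0 - cos (θ0 / 2) ≠ 0 := (sub_neg.mpr hy).ne
    by_contra! ha1
    have hpos : 0 < 4 * a ^ 2 * (a - 1) * sin (θ0 / 2) ^ 2 * (cos θ0 - cos (θ0 / 2)) ^ 2 := by
      have : 0 < a - 1 := by linarith
      positivity
    have hnn : 0 ≤ cos (θT / 4) ^ 2 * (1 - A (θ0 / 2) ^ 2 - C (θ0 / 2) ^ 2) :=
      mul_nonneg (by positivity) (by linarith [h (θ0 / 2)])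
    linarith [hid (θ0 / 2)]
  · intro h θ
    have h1 : 0 ≤ 1 - a := by linarith
    have hnn : 0 ≤ cos (θT / 4) ^ 2 * (1 - A θ ^ 2 - C θ ^ 2) := by
      rw [hid]; positivity
    have := nonneg_of_mul_nonneg_right hnn (by positivity)
    linarith
end
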